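/- arXiv:2306.09731 — 3 statements merged into one kernel-verified Lean document; each statement's English description precedes it below -/
import Mathlib

section
/- Let h and ū be smooth and satisfy the 2D Serre–Green–Naghdi system (mass equation h_t + ∇·(h ū) = 0 and momentum equations ∂_t(h ū_i) + Σ_{j=1,2} ∂_j(h ū_i ū_j + p δ_{ij}) = 0 for i = 1,2) with h > 0 everywhere. Then the local energy conservation law holds: ∂_t(h E) + ∇·(h E ū + p ū) = 0, where E = |ū|²/2 + g h/2 + ḣ²/6. -/
noncomputable section

/-- Partial derivative in the time variable of a function of `(t, x, y)`. -/
def pT (f : ℝ → ℝ → ℝ → ℝ) : ℝ → ℝ → ℝ → ℝ := fun t x y => deriv (fun s => f s x y) t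

/-- Partial derivative in the first space variable of a function of `(t, x, y)`. -/
def pX (f : ℝ → ℝ → ℝ → ℝ) : ℝ → ℝ → ℝ → ℝ := fun t x y => deriv (fun s => f t s y) x

/-- Partial derivative in the second space variable of a function of `(t, x, y)`. -/
def pY (f : ℝ → ℝ → ℝ → ℝ) : ℝ → ℝ → ℝ → ℝ := fun t x y => deriv (fun s => f t x s) y

/-- Smoothness of a function of `(t, x, y)`. -/
def Smooth3 (f : ℝ → ℝ → ℝ → ℝ) : Prop :=
  ContDiff ℝ (⊤ : ℕ∞) (fun q : ℝ × ℝ × ℝ => f q.1 q.2.1 q.2.2)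

namespace Smooth3

variable {f : ℝ → ℝ → ℝ → ℝ}

theorem hasDerivAt_pT (hf : Smooth3 f) (t x y : ℝ) :
    HasDerivAt (fun s => f s x y) (pT f t x y) t := by
  have hs : ContDiff ℝ (⊤ : ℕ∞) (fun s : ℝ => f s x y) :=
    ContDiff.comp (g := fun q : ℝ × ℝ × ℝ => f q.1 q.2.1 q.2.2) hf
      (contDiff_id.prodMk (contDiff_const (c := (x, y))))
  exact (hs.differentiable (by simp) t).hasDerivAt

theorem hasDerivAt_pX (hf : Smooth3 f) (t x y : ℝ) :
    HasDerivAt (fun s => f t s y) (pX f t x y) x := by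
  have hs : ContDiff ℝ (⊤ : ℕ∞) (fun s : ℝ => f t s y) :=
    ContDiff.comp (g := fun q : ℝ × ℝ × ℝ => f q.1 q.2.1 q.2.2) hf
      (contDiff_const.prodMk (contDiff_id.prodMk contDiff_const))
  exact (hs.differentiable (by simp) x).hasDerivAt

theorem hasDerivAt_pY (hf : Smooth3 f) (t x y : ℝ) :
    HasDerivAt (fun s => f t x s) (pY f t x y) y := by
  have hs : ContDiff ℝ (⊤ : ℕ∞) (fun s : ℝ => f t x s) :=
    ContDiff.comp (g := fun q : ℝ × ℝ × ℝ => f q.1 q.2.1 q.2.2) hf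
      (contDiff_const.prodMk (contDiff_const.prodMk contDiff_id))
  exact (hs.differentiable (by simp) y).hasDerivAt

theorem fderiv_apply_const (hf : Smooth3 f) (v : ℝ × ℝ × ℝ) :
    ContDiff ℝ (⊤ : ℕ∞)
      (fun q => fderiv ℝ (fun q : ℝ × ℝ × ℝ => f q.1 q.2.1 q.2.2) q v) :=
  (ContDiff.fderiv_right (m := (⊤ : ℕ∞)) hf (by simp)).clm_apply contDiff_const

theorem hasFDerivAt (hf : Smooth3 f) (q : ℝ × ℝ × ℝ) :
    HasFDerivAt (fun q : ℝ × ℝ × ℝ => f q.1 q.2.1 q.2.2)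
      (fderiv ℝ (fun q : ℝ × ℝ × ℝ => f q.1 q.2.1 q.2.2) q) q :=
  (ContDiff.differentiable hf (by simp) q).hasFDerivAt

protected theorem pT (hf : Smooth3 f) : Smooth3 (pT f) := by
  refine (congrArg (ContDiff ℝ (⊤ : ℕ∞)) (funext fun q => ?_)).mpr
    (hf.fderiv_apply_const (1, 0, 0))
  exact ((hf.hasFDerivAt q).comp_hasDerivAt q.1
    ((hasDerivAt_id q.1).prodMk (hasDerivAt_const q.1 q.2))).deriv

protected theorem pX (hf : Smooth3 f) : Smooth3 (pX f) := by
  refine (congrArg (ContDiff ℝ (⊤ : ℕ∞)) (funext fun q => ?_)).mpr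
    (hf.fderiv_apply_const (0, 1, 0))
  exact ((hf.hasFDerivAt q).comp_hasDerivAt q.2.1
    ((hasDerivAt_const q.2.1 q.1).prodMk
      ((hasDerivAt_id q.2.1).prodMk (hasDerivAt_const q.2.1 q.2.2)))).deriv

protected theorem pY (hf : Smooth3 f) : Smooth3 (pY f) := by
  refine (congrArg (ContDiff ℝ (⊤ : ℕ∞)) (funext fun q => ?_)).mpr
    (hf.fderiv_apply_const (0, 0, 1))
  exact ((hf.hasFDerivAt q).comp_hasDerivAt q.2.2
    ((hasDerivAt_const q.2.2 q.1).prodMk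
      ((hasDerivAt_const q.2.2 q.2.1).prodMk (hasDerivAt_id q.2.2)))).deriv

/-- The material derivative of a smooth function along a smooth velocity field is smooth. -/
theorem materialDeriv {u v : ℝ → ℝ → ℝ → ℝ} (hf : Smooth3 f) (hu : Smooth3 u)
    (hv : Smooth3 v) :
    Smooth3 (fun t x y => pT f t x y + u t x y * pX f t x y + v t x y * pY f t x y) :=
  (ContDiff.add hf.pT (ContDiff.mul hu hf.pX)).add (ContDiff.mul hv hf.pY)

end Smooth3

/-- Derivative of the energy density `h E` along a one-variable slice. -/
theorem hasDerivAt_energy_density {h u v d E : ℝ → ℝ} {h' u' v' d' g a : ℝ}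
    (hE : E = fun s => (u s ^ 2 + v s ^ 2) / 2 + g * h s / 2 + d s ^ 2 / 6)
    (hh : HasDerivAt h h' a) (hu : HasDerivAt u u' a) (hv : HasDerivAt v v' a)
    (hd : HasDerivAt d d' a) :
    HasDerivAt (fun s => h s * E s)
      (h' * E a + h a * (u a * u' + v a * v' + g * h' / 2 + d a * d' / 3)) a := by
  subst hE
  convert! hh.mul (((((hu.pow 2).add (hv.pow 2)).div_const 2).add
    ((hh.const_mul g).div_const 2)).add ((hd.pow 2).div_const 6)) using 1
  simp only [Pi.add_apply, Pi.pow_apply, Nat.cast_ofNat, Nat.add_one_sub_one, pow_one]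
  ring

/-- If smooth `h > 0` and `ū = (u1, u2)` satisfy the 2D Serre–Green–Naghdi system
(mass and momentum equations), then the local energy conservation law
`∂ₜ(hE) + ∇·(hEū + pū) = 0` holds, with `E = |ū|²/2 + gh/2 + ḣ²/6`. -/
theorem sgn2d_local_energy_conservation
    (g : ℝ) (hg : 0 < g)
    (h u1 u2 : ℝ → ℝ → ℝ → ℝ)
    (h_smooth : Smooth3 h) (u1_smooth : Smooth3 u1) (u2_smooth : Smooth3 u2)
    (h_pos : ∀ t x y, 0 < h t x y)
    (hdot : ℝ → ℝ → ℝ → ℝ)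
    (hdot_def : hdot = fun t x y =>
      pT h t x y + u1 t x y * pX h t x y + u2 t x y * pY h t x y)
    (hddot : ℝ → ℝ → ℝ → ℝ)
    (hddot_def : hddot = fun t x y =>
      pT hdot t x y + u1 t x y * pX hdot t x y + u2 t x y * pY hdot t x y)
    (p : ℝ → ℝ → ℝ → ℝ)
    (p_def : p = fun t x y => g * (h t x y) ^ 2 / 2 + (h t x y) ^ 2 / 3 * hddot t x y)
    (mass : ∀ t x y,
      pT h t x y + pX (fun t x y => h t x y * u1 t x y) t x y
        + pY (fun t x y => h t x y * u2 t x y) t x y = 0)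
    (mom1 : ∀ t x y,
      pT (fun t x y => h t x y * u1 t x y) t x y
        + pX (fun t x y => h t x y * u1 t x y * u1 t x y + p t x y) t x y
        + pY (fun t x y => h t x y * u1 t x y * u2 t x y) t x y = 0)
    (mom2 : ∀ t x y,
      pT (fun t x y => h t x y * u2 t x y) t x y
        + pX (fun t x y => h t x y * u2 t x y * u1 t x y) t x y
        + pY (fun t x y => h t x y * u2 t x y * u2 t x y + p t x y) t x y = 0)
    (E : ℝ → ℝ → ℝ → ℝ)
    (E_def : E = fun t x y =>
      ((u1 t x y) ^ 2 + (u2 t x y) ^ 2) / 2 + g * h t x y / 2 + (hdot t x y) ^ 2 / 6) :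
    ∀ t x y,
      pT (fun t x y => h t x y * E t x y) t x y
        + pX (fun t x y => h t x y * E t x y * u1 t x y + p t x y * u1 t x y) t x y
        + pY (fun t x y => h t x y * E t x y * u2 t x y + p t x y * u2 t x y) t x y = 0 := by
  intro t x y
  have d_smooth : Smooth3 hdot := hdot_def ▸ h_smooth.materialDeriv u1_smooth u2_smooth
  have dd_smooth : Smooth3 hddot := hddot_def ▸ d_smooth.materialDeriv u1_smooth u2_smooth
  have p_smooth : Smooth3 p := by
    subst p_def
    unfold Smooth3 at h_smooth dd_smooth ⊢
    fun_prop
  have hT := h_smooth.hasDerivAt_pT t x y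
  have hX := h_smooth.hasDerivAt_pX t x y
  have hY := h_smooth.hasDerivAt_pY t x y
  have uT := u1_smooth.hasDerivAt_pT t x y
  have uX := u1_smooth.hasDerivAt_pX t x y
  have uY := u1_smooth.hasDerivAt_pY t x y
  have vT := u2_smooth.hasDerivAt_pT t x y
  have vX := u2_smooth.hasDerivAt_pX t x y
  have vY := u2_smooth.hasDerivAt_pY t x y
  have pX' := p_smooth.hasDerivAt_pX t x y
  have pY' := p_smooth.hasDerivAt_pY t x y
  have eT := hasDerivAt_energy_density (E := fun s => E s x y) (by rw [E_def])
    hT uT vT (d_smooth.hasDerivAt_pT t x y)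
  have eX := hasDerivAt_energy_density (E := fun s => E t s y) (by rw [E_def])
    hX uX vX (d_smooth.hasDerivAt_pX t x y)
  have eY := hasDerivAt_energy_density (E := fun s => E t x s) (by rw [E_def])
    hY uY vY (d_smooth.hasDerivAt_pY t x y)
  have energyT : pT (fun t x y => h t x y * E t x y) t x y = _ := eT.deriv
  have energyX : pX (fun t x y => h t x y * E t x y * u1 t x y + p t x y * u1 t x y) t x y = _ :=
    ((eX.mul uX).add (pX'.mul uX)).deriv
  have energyY : pY (fun t x y => h t x y * E t x y * u2 t x y + p t x y * u2 t x y) t x y = _ :=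
    ((eY.mul vY).add (pY'.mul vY)).deriv
  have massX : pX (fun t x y => h t x y * u1 t x y) t x y = _ := (hX.mul uX).deriv
  have massY : pY (fun t x y => h t x y * u2 t x y) t x y = _ := (hY.mul vY).deriv
  have mom1T : pT (fun t x y => h t x y * u1 t x y) t x y = _ := (hT.mul uT).deriv
  have mom1X : pX (fun t x y => h t x y * u1 t x y * u1 t x y + p t x y) t x y = _ :=
    (((hX.mul uX).mul uX).add pX').deriv
  have mom1Y : pY (fun t x y => h t x y * u1 t x y * u2 t x y) t x y = _ :=
    ((hY.mul uY).mul vY).deriv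
  have mom2T : pT (fun t x y => h t x y * u2 t x y) t x y = _ := (hT.mul vT).deriv
  have mom2X : pX (fun t x y => h t x y * u2 t x y * u1 t x y) t x y = _ :=
    ((hX.mul vX).mul uX).deriv
  have mom2Y : pY (fun t x y => h t x y * u2 t x y * u2 t x y + p t x y) t x y = _ :=
    (((hY.mul vY).mul vY).add pY').deriv
  have mass' := mass t x y
  have mom1' := mom1 t x y
  have mom2' := mom2 t x y
  rw [massX, massY] at mass'
  rw [mom1T, mom1X, mom1Y] at mom1'
  rw [mom2T, mom2X, mom2Y] at mom2'
  rw [energyT, energyX, energyY]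
  have p_eq := congrFun (congrFun (congrFun p_def t) x) y
  have d_eq := congrFun (congrFun (congrFun hdot_def t) x) y
  have dd_eq := congrFun (congrFun (congrFun hddot_def t) x) y
  simp only [Pi.mul_apply] at mass' mom1' mom2' p_eq d_eq dd_eq ⊢
  linear_combination
    (E t x y - u1 t x y ^ 2 - u2 t x y ^ 2 + g * h t x y / 2 + h t x y * hddot t x y / 3) * mass'
      + u1 t x y * mom1' + u2 t x y * mom2' + (pX u1 t x y + pY u2 t x y) * p_eq
      + h t x y / 3 * hddot t x y * d_eq - h t x y / 3 * hdot t x y * dd_eq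
end
end

section
/- Let h, ū be smooth with h > 0 everywhere, let σ = (h²/3) ḣ with ḣ = h_t + ū·∇h, and let φ be a smooth function with ∇φ = ū + (1/h) ∇σ. If the mass equation h_t + ∇·(h ū) = 0 holds, then the elliptic equation 3σ/h³ − ∇·( (1/h) ∇σ ) = −Δφ holds pointwise. -/
noncomputable section

/-- A smooth function of `(t, x, y)` is smooth in `x`. -/
theorem Smooth3.contDiff_x {f : ℝ → ℝ → ℝ → ℝ} (hf : Smooth3 f) (t y : ℝ) :
    ContDiff ℝ (⊤ : ℕ∞) (fun s => f t s y) :=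
  ContDiff.comp (g := fun q : ℝ × ℝ × ℝ => f q.1 q.2.1 q.2.2) (f := fun s : ℝ => (t, s, y)) hf
    (by fun_prop)

/-- A smooth function of `(t, x, y)` is smooth in `y`. -/
theorem Smooth3.contDiff_y {f : ℝ → ℝ → ℝ → ℝ} (hf : Smooth3 f) (t x : ℝ) :
    ContDiff ℝ (⊤ : ℕ∞) (fun s => f t x s) :=
  ContDiff.comp (g := fun q : ℝ × ℝ × ℝ => f q.1 q.2.1 q.2.2) (f := fun s : ℝ => (t, x, s)) hf
    (by fun_prop)

/-- The first derivative of a smooth function of one variable is differentiable. -/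
theorem ContDiff.differentiable_deriv_of_smooth {f : ℝ → ℝ} (hf : ContDiff ℝ (⊤ : ℕ∞) f) :
    Differentiable ℝ (deriv f) :=
  (contDiff_infty_iff_deriv.mp hf).2.differentiable (by simp)

/-- For smooth `h > 0`, `ū = (u1, u2)`, with `σ = (h²/3)ḣ` and a smooth potential `φ`
with `∇φ = ū + (1/h)∇σ`, the mass equation implies the elliptic equation
`3σ/h³ − ∇·((1/h)∇σ) = −Δφ` pointwise. -/
theorem sgn2d_elliptic_equation_for_sigma
    (h u1 u2 : ℝ → ℝ → ℝ → ℝ)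
    (h_smooth : Smooth3 h) (u1_smooth : Smooth3 u1) (u2_smooth : Smooth3 u2)
    (h_pos : ∀ t x y, 0 < h t x y)
    (hdot : ℝ → ℝ → ℝ → ℝ)
    (hdot_def : hdot = fun t x y =>
      pT h t x y + u1 t x y * pX h t x y + u2 t x y * pY h t x y)
    (σ : ℝ → ℝ → ℝ → ℝ)
    (σ_def : σ = fun t x y => (h t x y) ^ 2 / 3 * hdot t x y)
    (φ : ℝ → ℝ → ℝ → ℝ)
    (φ_smooth : Smooth3 φ)
    (gradφ_x : ∀ t x y, pX φ t x y = u1 t x y + pX σ t x y / h t x y)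
    (gradφ_y : ∀ t x y, pY φ t x y = u2 t x y + pY σ t x y / h t x y)
    (mass : ∀ t x y,
      pT h t x y + pX (fun t x y => h t x y * u1 t x y) t x y
        + pY (fun t x y => h t x y * u2 t x y) t x y = 0) :
    ∀ t x y,
      3 * σ t x y / (h t x y) ^ 3
        - (pX (fun t x y => pX σ t x y / h t x y) t x y
            + pY (fun t x y => pY σ t x y / h t x y) t x y)
      = -(pX (pX φ) t x y + pY (pY φ) t x y) := by
  intro t x y
  have hne : h t x y ≠ 0 := (h_pos t x y).ne'
  have dhx : DifferentiableAt ℝ (fun s => h t s y) x :=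
    (h_smooth.contDiff_x t y).differentiable (by simp) x
  have dhy : DifferentiableAt ℝ (fun s => h t x s) y :=
    (h_smooth.contDiff_y t x).differentiable (by simp) y
  have du1 : DifferentiableAt ℝ (fun s => u1 t s y) x :=
    (u1_smooth.contDiff_x t y).differentiable (by simp) x
  have du2 : DifferentiableAt ℝ (fun s => u2 t x s) y :=
    (u2_smooth.contDiff_y t x).differentiable (by simp) y
  have dφx : DifferentiableAt ℝ (fun s => pX φ t s y) x :=
    (φ_smooth.contDiff_x t y).differentiable_deriv_of_smooth x
  have dφy : DifferentiableAt ℝ (fun s => pY φ t x s) y :=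
    (φ_smooth.contDiff_y t x).differentiable_deriv_of_smooth y
  have flux_x : pX (fun t x y => pX σ t x y / h t x y) t x y
      = pX (pX φ) t x y - pX u1 t x y := by
    have e : (fun t x y => pX σ t x y / h t x y) = fun t x y => pX φ t x y - u1 t x y := by
      funext t x y
      rw [gradφ_x]
      ring
    rw [e]
    exact deriv_fun_sub dφx du1
  have flux_y : pY (fun t x y => pY σ t x y / h t x y) t x y
      = pY (pY φ) t x y - pY u2 t x y := by
    have e : (fun t x y => pY σ t x y / h t x y) = fun t x y => pY φ t x y - u2 t x y := by
      funext t x y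
      rw [gradφ_y]
      ring
    rw [e]
    exact deriv_fun_sub dφy du2
  have prod_x : pX (fun t x y => h t x y * u1 t x y) t x y
      = pX h t x y * u1 t x y + h t x y * pX u1 t x y := deriv_fun_mul dhx du1
  have prod_y : pY (fun t x y => h t x y * u2 t x y) t x y
      = pY h t x y * u2 t x y + h t x y * pY u2 t x y := deriv_fun_mul dhy du2
  have hdot_eq : hdot t x y = -(h t x y * (pX u1 t x y + pY u2 t x y)) := by
    have m := mass t x y
    rw [prod_x, prod_y] at m
    rw [hdot_def]
    linear_combination m
  have σ_eq : 3 * σ t x y / (h t x y) ^ 3 = -(pX u1 t x y + pY u2 t x y) := by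
    simp only [σ_def, hdot_eq]
    field_simp
  rw [flux_x, flux_y, σ_eq]
  ring
end
end

section
/- Let g > 0, h_∞ > 0 and c > 0 with c² > g h_∞, and set m = −c h_∞. Define h_c(ξ) = h_∞ + ((c² − g h_∞)/g) sech²( (ξ/(2 c h_∞)) √(3 (c² − g h_∞)) ) and u_c(ξ) = c + m/h_c(ξ). Then h(t,x) = h_c(x − c t), u(t,x) = u_c(x − c t) is a smooth solution of the 1D Serre–Green–Naghdi equations: h_t + (h u)_x = 0 and (h u)_t + (h u² + p)_x = 0, with p = g h²/2 + (h²/3) ḧ, ḣ = h_t + u h_x, ḧ = (ḣ)_t + u (ḣ)_x. -/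
noncomputable section

/-- Partial derivative in the time variable of a function of `(t, x)`. -/
def pT2 (f : ℝ → ℝ → ℝ) : ℝ → ℝ → ℝ := fun t x => deriv (fun s => f s x) t

/-- Partial derivative in the space variable of a function of `(t, x)`. -/
def pX2 (f : ℝ → ℝ → ℝ) : ℝ → ℝ → ℝ := fun t x => deriv (fun s => f t s) x

/-- Smoothness of a function of `(t, x)`. -/
def Smooth2 (f : ℝ → ℝ → ℝ) : Prop :=
  ContDiff ℝ (⊤ : ℕ∞) (fun q : ℝ × ℝ => f q.1 q.2)

/-- Time derivative of a travelling wave. -/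
lemma pT2_travelling {f f' : ℝ → ℝ} (hf : ∀ ξ, HasDerivAt f (f' ξ) ξ) (c : ℝ) :
    pT2 (fun t x => f (x - c * t)) = fun t x => -c * f' (x - c * t) := by
  funext t x
  have hphase : HasDerivAt (fun s : ℝ => x - c * s) (-c) t := by
    simpa using ((hasDerivAt_id t).const_mul c).const_sub x
  simpa [pT2, Function.comp_def, mul_comm] using ((hf (x - c * t)).comp t hphase).deriv

/-- Space derivative of a travelling wave. -/
lemma pX2_travelling {f f' : ℝ → ℝ} (hf : ∀ ξ, HasDerivAt f (f' ξ) ξ) (c : ℝ) :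
    pX2 (fun t x => f (x - c * t)) = fun t x => f' (x - c * t) := by
  funext t x
  exact ((hf (x - c * t)).comp_sub_const x (c * t)).deriv

/-- A smooth profile gives a smooth travelling wave. -/
lemma smooth2_travelling {f : ℝ → ℝ} (hf : ContDiff ℝ (⊤ : ℕ∞) f) (c : ℝ) :
    Smooth2 (fun t x => f (x - c * t)) := by
  unfold Smooth2
  fun_prop

lemma hasDerivAt_sech_sq (k ξ : ℝ) :
    HasDerivAt (fun ξ => (1 / Real.cosh (ξ * k)) ^ 2)
      (-2 * k * Real.sinh (ξ * k) / Real.cosh (ξ * k) ^ 3) ξ := by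
  have hne : Real.cosh (ξ * k) ≠ 0 := (Real.cosh_pos _).ne'
  have hcosh := ((hasDerivAt_id ξ).mul_const k).cosh
  refine (((hasDerivAt_const ξ (1 : ℝ)).div hcosh hne).pow 2).congr_deriv ?_
  simp
  field_simp

lemma hasDerivAt_deriv_sech_sq (k ξ : ℝ) :
    HasDerivAt (fun ξ => -2 * k * Real.sinh (ξ * k) / Real.cosh (ξ * k) ^ 3)
      (4 * k ^ 2 * (1 / Real.cosh (ξ * k)) ^ 2 - 6 * k ^ 2 * ((1 / Real.cosh (ξ * k)) ^ 2) ^ 2)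
      ξ := by
  have hne : Real.cosh (ξ * k) ≠ 0 := (Real.cosh_pos _).ne'
  have hcosh := ((hasDerivAt_id ξ).mul_const k).cosh
  have hsinh := ((hasDerivAt_id ξ).mul_const k).sinh
  refine ((hsinh.const_mul (-2 * k)).div (hcosh.pow 3) (pow_ne_zero 3 hne)).congr_deriv ?_
  simp
  field_simp
  rw [Real.sinh_sq]
  ring

/-- A positive profile whose total momentum flux in the moving frame is constant gives a
travelling wave solution of the Serre–Green–Naghdi equations. -/
lemma sgn_travelling_of_flux_const {g c m K : ℝ} {H H' H'' : ℝ → ℝ}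
    (hpos : ∀ ξ, 0 < H ξ) (hH : ∀ ξ, HasDerivAt H (H' ξ) ξ) (hH' : ∀ ξ, HasDerivAt H' (H'' ξ) ξ)
    (hflux : ∀ ξ, m ^ 2 / H ξ + g * H ξ ^ 2 / 2 + m ^ 2 / 3 * (H'' ξ - H' ξ ^ 2 / H ξ) = K)
    {h u hdot hddot p : ℝ → ℝ → ℝ}
    (h_def : h = fun t x => H (x - c * t))
    (u_def : u = fun t x => c + m / H (x - c * t))
    (hdot_def : hdot = fun t x => pT2 h t x + u t x * pX2 h t x)
    (hddot_def : hddot = fun t x => pT2 hdot t x + u t x * pX2 hdot t x)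
    (p_def : p = fun t x => g * (h t x) ^ 2 / 2 + (h t x) ^ 2 / 3 * hddot t x) :
    (∀ t x, pT2 h t x + pX2 (fun t x => h t x * u t x) t x = 0) ∧
    (∀ t x, pT2 (fun t x => h t x * u t x) t x
      + pX2 (fun t x => h t x * (u t x) ^ 2 + p t x) t x = 0) := by
  have hne : ∀ ξ, H ξ ≠ 0 := fun ξ => (hpos ξ).ne'
  have hdot_eq : hdot = fun t x => (fun ξ => m * H' ξ / H ξ) (x - c * t) := by
    rw [hdot_def, h_def, pT2_travelling hH, pX2_travelling hH, u_def]
    funext t x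
    ring
  have hdot_deriv : ∀ ξ, HasDerivAt (fun ξ => m * H' ξ / H ξ)
      ((m * H'' ξ * H ξ - m * H' ξ * H' ξ) / H ξ ^ 2) ξ := fun ξ =>
    ((hH' ξ).const_mul m).div (hH ξ) (hne ξ)
  have hddot_eq : hddot = fun t x =>
      m ^ 2 * (H'' (x - c * t) * H (x - c * t) - H' (x - c * t) ^ 2) / H (x - c * t) ^ 3 := by
    rw [hddot_def, hdot_eq, pT2_travelling hdot_deriv, pX2_travelling hdot_deriv, u_def]
    funext t x
    have := hne (x - c * t)
    field_simp
    ring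
  have discharge_eq : (fun t x => h t x * u t x) =
      fun t x => (fun ξ => c * H ξ + m) (x - c * t) := by
    rw [h_def, u_def]
    funext t x
    have := hne (x - c * t)
    field_simp
  have flux_eq : (fun t x => h t x * (u t x) ^ 2 + p t x) =
      fun t x => (fun ξ => c ^ 2 * H ξ + (2 * c * m + K)) (x - c * t) := by
    rw [p_def, hddot_eq, h_def, u_def]
    funext t x
    have := hne (x - c * t)
    simp only [← hflux (x - c * t)]
    field_simp
    ring
  have discharge_deriv : ∀ ξ, HasDerivAt (fun ξ => c * H ξ + m) (c * H' ξ) ξ := fun ξ =>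
    ((hH ξ).const_mul c).add_const m
  have flux_deriv : ∀ ξ, HasDerivAt (fun ξ => c ^ 2 * H ξ + (2 * c * m + K))
      (c ^ 2 * H' ξ) ξ := fun ξ => ((hH ξ).const_mul (c ^ 2)).add_const _
  rw [flux_eq, discharge_eq, h_def, pT2_travelling hH, pX2_travelling discharge_deriv,
    pT2_travelling discharge_deriv, pX2_travelling flux_deriv]
  exact ⟨fun t x => by ring, fun t x => by ring⟩

/-- The solitary wave `h(t,x) = h_c(x − ct)`, `u(t,x) = u_c(x − ct)`, with
`h_c(ξ) = h_∞ + ((c² − gh_∞)/g) sech²((ξ/(2ch_∞))√(3(c² − gh_∞)))` and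
`u_c = c + m/h_c`, `m = −ch_∞`, is a smooth solution of the 1D Serre–Green–Naghdi
equations `hₜ + (hu)ₓ = 0` and `(hu)ₜ + (hu² + p)ₓ = 0` with
`p = gh²/2 + (h²/3)ḧ`. -/
theorem sgn1d_solitary_wave_is_solution
    (g hinf c : ℝ) (hg : 0 < g) (hinf_pos : 0 < hinf) (hc_pos : 0 < c)
    (hsup : g * hinf < c ^ 2)
    (m : ℝ) (m_def : m = -c * hinf)
    (hc uc : ℝ → ℝ)
    (hc_def : hc = fun ξ => hinf + (c ^ 2 - g * hinf) / g *
      (1 / Real.cosh (ξ / (2 * c * hinf) * Real.sqrt (3 * (c ^ 2 - g * hinf)))) ^ 2)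
    (uc_def : uc = fun ξ => c + m / hc ξ)
    (h u : ℝ → ℝ → ℝ)
    (h_def : h = fun t x => hc (x - c * t))
    (u_def : u = fun t x => uc (x - c * t))
    (hdot : ℝ → ℝ → ℝ)
    (hdot_def : hdot = fun t x => pT2 h t x + u t x * pX2 h t x)
    (hddot : ℝ → ℝ → ℝ)
    (hddot_def : hddot = fun t x => pT2 hdot t x + u t x * pX2 hdot t x)
    (p : ℝ → ℝ → ℝ)
    (p_def : p = fun t x => g * (h t x) ^ 2 / 2 + (h t x) ^ 2 / 3 * hddot t x) :
    Smooth2 h ∧ Smooth2 u ∧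
    (∀ t x, pT2 h t x + pX2 (fun t x => h t x * u t x) t x = 0) ∧
    (∀ t x, pT2 (fun t x => h t x * u t x) t x
      + pX2 (fun t x => h t x * (u t x) ^ 2 + p t x) t x = 0) := by
  obtain ⟨k, hk⟩ : ∃ k, k = Real.sqrt (3 * (c ^ 2 - g * hinf)) / (2 * c * hinf) := ⟨_, rfl⟩
  have hk_sq : k ^ 2 = 3 * (c ^ 2 - g * hinf) / (4 * c ^ 2 * hinf ^ 2) := by
    rw [hk, div_pow, Real.sq_sqrt (by linarith)]
    ring
  have hc_eq : hc = fun ξ => hinf + (c ^ 2 - g * hinf) / g * (1 / Real.cosh (ξ * k)) ^ 2 := by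
    rw [hc_def, hk]
    funext ξ
    ring_nf
  have amp_pos : 0 < (c ^ 2 - g * hinf) / g := div_pos (by linarith) hg
  have hc_gt : ∀ ξ, 0 < hc ξ := fun ξ => by
    rw [hc_eq]
    positivity
  have cosh_ne : ∀ ξ, Real.cosh (ξ * k) ≠ 0 := fun ξ => (Real.cosh_pos _).ne'
  have hc_smooth : ContDiff ℝ (⊤ : ℕ∞) hc := by
    rw [hc_eq]
    have hcosh : ContDiff ℝ (⊤ : ℕ∞) (fun ξ : ℝ => Real.cosh (ξ * k)) :=
      Real.contDiff_cosh.comp (contDiff_id.mul contDiff_const)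
    exact contDiff_const.add (contDiff_const.mul ((contDiff_const.div hcosh cosh_ne).pow 2))
  have uc_smooth : ContDiff ℝ (⊤ : ℕ∞) uc := by
    rw [uc_def]
    exact contDiff_const.add (contDiff_const.div hc_smooth fun ξ => (hc_gt ξ).ne')
  refine ⟨h_def ▸ smooth2_travelling hc_smooth c, u_def ▸ smooth2_travelling uc_smooth c, ?_⟩
  rw [uc_def] at u_def
  refine sgn_travelling_of_flux_const (K := c ^ 2 * hinf + g * hinf ^ 2 / 2) hc_gt
    (fun ξ => hc_eq ▸ ((hasDerivAt_sech_sq k ξ).const_mul _).const_add _)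
    (fun ξ => (hasDerivAt_deriv_sech_sq k ξ).const_mul _)
    (fun ξ => ?_) h_def u_def hdot_def hddot_def p_def
  have hne := (hc_gt ξ).ne'
  have slope_sq : (-2 * k * Real.sinh (ξ * k) / Real.cosh (ξ * k) ^ 3) ^ 2 =
      4 * k ^ 2 * ((1 / Real.cosh (ξ * k)) ^ 2) ^ 2 * (1 - (1 / Real.cosh (ξ * k)) ^ 2) := by
    have := cosh_ne ξ
    field_simp
    rw [Real.sinh_sq]
    ring
  rw [mul_pow _ (_ / _) 2, slope_sq, hk_sq, m_def]
  have hc_val := congrFun hc_eq ξ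
  generalize (1 / Real.cosh (ξ * k)) ^ 2 = S at hc_val ⊢
  generalize hc ξ = H at hne hc_val ⊢
  have hA : c ^ 2 - g * hinf ≠ 0 := (sub_pos.2 hsup).ne'
  obtain ⟨A, c_sq⟩ : ∃ A, c ^ 2 = A + g * hinf := ⟨c ^ 2 - g * hinf, by ring⟩
  rw [show c ^ 2 - g * hinf = A by linarith] at *
  have hS : S = g * (H - hinf) / A := by
    rw [hc_val]
    field_simp
    ring
  rw [hS]
  field_simp
  rw [c_sq]
  ring
end
end
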